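/- Let G be a group, H a finite-dimensional complex inner product space, and U : G →* (H ≃ₗᵢ[ℂ] H) a unitary representation of G on H. Two unit vectors ψ, φ ∈ H are unitarily G-equivalent (there exists a G-invariant unitary V on H with V ψ = φ) if and only if their characteristic functions coincide: ⟪ψ, U(g) ψ⟫ = ⟪φ, U(g) φ⟫ for all g ∈ G. -/

import Mathlib

open scoped ComplexInnerProductSpace

/-!
If `ψ` and `φ` have the same characteristic function, then `U g ψ ↦ U g φ` preserves inner products,
so it extends by zero on the orthogonal complement of the orbit of `ψ` to an equivariant partial
isometry `a`. It remains to extend `a` to an equivariant unitary, i.e. to see that the commutant is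
a finite von Neumann algebra. If `ker a ≠ 0`, then some equivariant operator has a nonzero component
`c` from `ker a` to `(range a)ᗮ`; restricting `c` to an eigenspace of `c* c` and rescaling makes it
a partial isometry, and adding it to `a` shrinks the kernel. Finite dimension makes this terminate.
-/

open Module.End

section StarRing

/-- A partial isometry in a ring with involution, encoded by the identity `a a* a = a`. For
operators it says that `a` is isometric on the orthogonal complement of its kernel; the initial
projection is then `star a * a` and the final projection is `a * star a`. -/
def IsPartialIsometry {A : Type*} [Mul A] [Star A] (a : A) : Prop :=
  a * star a * a = a

theorem IsPartialIsometry.star_mul_mul_star {A : Type*} [Semigroup A] [StarMul A] {a : A}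
    (ha : IsPartialIsometry a) : star a * a * star a = star a := by
  simpa only [star_mul, star_star, mul_assoc] using congrArg star ha

theorem IsPartialIsometry.add {A : Type*} [NonUnitalRing A] [StarRing A] {a b : A}
    (ha : IsPartialIsometry a) (hb : IsPartialIsometry b)
    (h_final : star a * b = 0) (h_initial : a * star b = 0) : IsPartialIsometry (a + b) := by
  have h_final' : star b * a = 0 := by simpa using congr(star $h_final)
  have h_initial' : b * star a = 0 := by simpa using congr(star $h_initial)
  calc (a + b) * star (a + b) * (a + b)
      = a * star a * a + b * star b * b + a * (star a * b) + b * (star b * a)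
        + a * star b * (a + b) + b * star a * (a + b) := by rw [star_add]; noncomm_ring
    _ = a + b := by
      rw [ha, hb, h_final, h_final', h_initial, h_initial']
      simp only [mul_zero, zero_mul, add_zero]

theorem isPartialIsometry_inv_sqrt_smul_mul {𝕜 A : Type*} [RCLike 𝕜] [Ring A] [StarRing A]
    [Algebra 𝕜 A] [StarModule 𝕜 A] {c q : A} {μ : ℝ} (hμ : 0 < μ) (hq : IsStarProjection q)
    (hcq : star c * c * q = (μ : 𝕜) • q) :
    IsPartialIsometry (((√μ : ℝ) : 𝕜)⁻¹ • (c * q)) := by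
  have h_sqrt : ((√μ : ℝ) : 𝕜) * ((√μ : ℝ) : 𝕜) = μ := by
    rw [← RCLike.ofReal_mul, Real.mul_self_sqrt hμ.le]
  have h_ne : ((√μ : ℝ) : 𝕜) ≠ 0 := by simpa using (Real.sqrt_pos.2 hμ).ne'
  have h_cube : c * q * star (c * q) * (c * q) = (μ : 𝕜) • (c * q) := by
    calc c * q * star (c * q) * (c * q) = c * (q * q) * (star c * c * q) := by
          rw [star_mul, hq.isSelfAdjoint.star_eq]; noncomm_ring
      _ = (μ : 𝕜) • (c * q) := by
          rw [hcq, hq.isIdempotentElem.eq, mul_smul_comm, mul_assoc, hq.isIdempotentElem.eq]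
  rw [IsPartialIsometry, star_smul, smul_mul_smul_comm, smul_mul_smul_comm, h_cube, smul_smul,
    star_inv₀, RCLike.star_def, RCLike.conj_ofReal, ← h_sqrt]
  congr 1
  field_simp

end StarRing

theorem exists_linearIsometry_span_of_inner_eq {𝕜 ι E F : Type*} [RCLike 𝕜]
    [NormedAddCommGroup E] [InnerProductSpace 𝕜 E] [NormedAddCommGroup F] [InnerProductSpace 𝕜 F]
    {v : ι → E} {w : ι → F} (h : ∀ i j, inner 𝕜 (v i) (v j) = inner 𝕜 (w i) (w j)) :
    ∃ L : Submodule.span 𝕜 (Set.range v) →ₗᵢ[𝕜] F,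
      ∀ i, L ⟨v i, Submodule.subset_span ⟨i, rfl⟩⟩ = w i := by
  let Tv := Finsupp.linearCombination 𝕜 v
  let Tw := Finsupp.linearCombination 𝕜 w
  have h_inner (f f') : inner 𝕜 (Tw f) (Tw f') = inner 𝕜 (Tv f) (Tv f') := by
    simp only [Tv, Tw, Finsupp.linearCombination_apply, Finsupp.sum, sum_inner, inner_sum,
      inner_smul_left, inner_smul_right, h]
  have h_congr {f f'} (hf : Tv f = Tv f') : Tw f = Tw f' := by
    rw [← sub_eq_zero, ← map_sub, ← inner_self_eq_zero (𝕜 := 𝕜), h_inner, map_sub, hf, sub_self,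
      inner_zero_left]
  have h_mem (f) : Tv f ∈ Submodule.span 𝕜 (Set.range v) :=
    (Finsupp.range_linearCombination 𝕜).le (LinearMap.mem_range_self Tv f)
  have h_surj : LinearMap.range (Tv.codRestrict _ h_mem) = ⊤ := by
    rw [LinearMap.range_codRestrict, Finsupp.range_linearCombination, Submodule.comap_subtype_self]
  obtain ⟨s, hs⟩ := (Tv.codRestrict _ h_mem).exists_rightInverse_of_surjective h_surj
  have hs_apply (x) : Tv (s x) = x := congr(($hs x : E))
  refine ⟨(Tw ∘ₗ s).isometryOfInner fun x y => ?_, fun i => ?_⟩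
  · simp only [LinearMap.comp_apply, h_inner, hs_apply, Submodule.coe_inner]
  · have h_single : Tw (Finsupp.single i 1) = w i := by simp [Tw]
    exact (h_congr (by simp [hs_apply, Tv])).trans h_single

section Operators

variable {𝕜 H : Type*} [RCLike 𝕜] [NormedAddCommGroup H] [InnerProductSpace 𝕜 H]
  [FiniteDimensional 𝕜 H]

theorem isStarProjection_starProjection_toLinearMap (K : Submodule 𝕜 H) :
    IsStarProjection (K.starProjection : H →ₗ[𝕜] H) := by
  have := FiniteDimensional.complete 𝕜 H
  exact (LinearMap.isStarProjection_toContinuousLinearMap_iff).1 isStarProjection_starProjection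

theorem commute_starProjection_of_mem_invtSubmodule {K : Submodule 𝕜 H} {T : H →ₗ[𝕜] H}
    (hT : K ∈ invtSubmodule T) (hT' : K ∈ invtSubmodule (star T)) :
    Commute T (K.starProjection : H →ₗ[𝕜] H) := by
  have h_idem := (isStarProjection_starProjection_toLinearMap K).isIdempotentElem
  refine ((LinearMap.IsIdempotentElem.commute_iff h_idem).2 ⟨?_, ?_⟩).symm
  · simpa using hT
  · simpa using Module.End.mem_invtSubmodule_adjoint_iff.1 hT'

theorem linearMap_star_mul_self_eq_zero_iff {T : H →ₗ[𝕜] H} : star T * T = 0 ↔ T = 0 := by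
  rw [← LinearMap.ker_eq_top, ← LinearMap.ker_eq_top (f := T), ← T.ker_adjoint_comp_self]
  rfl

theorem exists_pos_hasEigenvalue_of_isPositive {T : H →ₗ[𝕜] H} (hT : T.IsPositive)
    (hT₀ : T ≠ 0) : ∃ μ : ℝ, 0 < μ ∧ HasEigenvalue T (μ : 𝕜) := by
  by_contra! h
  refine hT₀ ((hT.isSymmetric.eigenvectorBasis rfl).toBasis.ext fun i => ?_)
  have h_eigenvalue : hT.isSymmetric.eigenvalues rfl i = 0 :=
    (hT.nonneg_eigenvalues rfl i).eq_of_not_lt'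
      fun hi => h _ hi (hT.isSymmetric.hasEigenvalue_eigenvalues rfl i)
  simp [h_eigenvalue]

theorem starProjection_eigenspace_mem_centralizer {S : Set (H →ₗ[𝕜] H)} {T : H →ₗ[𝕜] H}
    (hT : T ∈ StarSubalgebra.centralizer 𝕜 S) (μ : 𝕜) :
    ((eigenspace T μ).starProjection : H →ₗ[𝕜] H) ∈ StarSubalgebra.centralizer 𝕜 S := by
  have h_inv : ∀ R, Commute R T → eigenspace T μ ∈ invtSubmodule R := fun R hR =>
    mapsTo_genEigenspace_of_comm hR.symm μ 1
  refine StarSubalgebra.mem_centralizer_iff 𝕜 |>.2 fun s hs => ?_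
  obtain ⟨h_comm, h_comm_star⟩ := (StarSubalgebra.mem_centralizer_iff 𝕜).1 hT s hs
  have h_inv_s := h_inv s h_comm
  have h_inv_star := h_inv (star s) h_comm_star
  exact ⟨commute_starProjection_of_mem_invtSubmodule h_inv_s h_inv_star,
    commute_starProjection_of_mem_invtSubmodule h_inv_star (by rwa [star_star])⟩

theorem exists_isStarProjection_mem_centralizer_mul_eq_smul {S : Set (H →ₗ[𝕜] H)}
    {T : H →ₗ[𝕜] H} (hTS : T ∈ StarSubalgebra.centralizer 𝕜 S) (hT : T.IsPositive) (hT₀ : T ≠ 0) :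
    ∃ μ : ℝ, 0 < μ ∧ ∃ q ∈ StarSubalgebra.centralizer 𝕜 S,
      IsStarProjection q ∧ q ≠ 0 ∧ T * q = (μ : 𝕜) • q := by
  obtain ⟨μ, hμ, h_eigen⟩ := exists_pos_hasEigenvalue_of_isPositive hT hT₀
  refine ⟨μ, hμ, ((eigenspace T (μ : 𝕜)).starProjection : H →L[𝕜] H),
    starProjection_eigenspace_mem_centralizer hTS _, isStarProjection_starProjection_toLinearMap _,
    fun h => ?_,
    LinearMap.ext fun x => mem_eigenspace_iff.1 (Submodule.starProjection_apply_mem _ x)⟩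
  obtain ⟨x, hx, hx₀⟩ := h_eigen.exists_hasEigenvector
  exact hx₀ ((Submodule.starProjection_eq_self_iff.2 hx).symm.trans congr($h x))

theorem exists_isPartialIsometry_mem_centralizer_of_ne_zero {S : Set (H →ₗ[𝕜] H)}
    {c : H →ₗ[𝕜] H} (hcS : c ∈ StarSubalgebra.centralizer 𝕜 S) (hc : c ≠ 0) :
    ∃ w ∈ StarSubalgebra.centralizer 𝕜 S,
      IsPartialIsometry w ∧ w ≠ 0 ∧ (∃ r, w = c * r) ∧ ∃ l, w = l * c := by
  obtain ⟨μ, hμ, q, hqS, hq, hq₀, hcq⟩ := exists_isStarProjection_mem_centralizer_mul_eq_smul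
    (mul_mem (star_mem hcS) hcS) (LinearMap.isPositive_adjoint_comp_self c)
    (mt linearMap_star_mul_self_eq_zero_iff.1 hc)
  have hqc : q * (star c * c) = (μ : 𝕜) • q := by
    simpa [hq.isSelfAdjoint.star_eq, mul_assoc] using congr(star $hcq)
  have hμ₀ : (μ : 𝕜) ≠ 0 := by exact_mod_cast hμ.ne'
  have h_sqrt : ((√μ : ℝ) : 𝕜)⁻¹ ≠ 0 := by simpa using (Real.sqrt_pos.2 hμ).ne'
  have hcq₀ : c * q ≠ 0 := fun h => smul_ne_zero hμ₀ hq₀ <| by rw [← hcq, mul_assoc, h, mul_zero]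
  have h_left : c * q = ((μ : 𝕜)⁻¹ • (c * q * star c)) * c := by
    rw [smul_mul_assoc, mul_assoc, mul_assoc, hqc, mul_smul_comm, inv_smul_smul₀ hμ₀]
  refine ⟨((√μ : ℝ) : 𝕜)⁻¹ • (c * q), SMulMemClass.smul_mem _ (mul_mem hcS hqS),
    isPartialIsometry_inv_sqrt_smul_mul hμ hq hcq, smul_ne_zero h_sqrt hcq₀,
    ⟨((√μ : ℝ) : 𝕜)⁻¹ • q, (mul_smul_comm _ _ _).symm⟩,
    ⟨((√μ : ℝ) : 𝕜)⁻¹ • (μ : 𝕜)⁻¹ • (c * q * star c), ?_⟩⟩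
  rw [smul_mul_assoc, ← h_left]

theorem exists_mem_one_sub_mul_mul_one_sub_ne_zero {M : StarSubalgebra 𝕜 (H →ₗ[𝕜] H)}
    {a : H →ₗ[𝕜] H} (ha : a ∈ M) (h_ker : LinearMap.ker a ≠ ⊥) :
    ∃ b ∈ M, (1 - a * star a) * b * (1 - star a * a) ≠ 0 := by
  -- Otherwise `ker a` lies in the subspace `J` below, which `star a` maps injectively, hence onto
  -- itself; but the range of `star a` is orthogonal to `ker a`.
  by_contra! h
  let J : Submodule 𝕜 H := ⨅ b ∈ M, LinearMap.ker ((1 - a * star a) * b)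
  have mem_J {x : H} : x ∈ J ↔ ∀ b ∈ M, ((1 - a * star a) * b) x = 0 := by
    simp only [J, Submodule.mem_iInf, LinearMap.mem_ker]
  have h_right_inv : ∀ x ∈ J, a (star a x) = x := fun x hx => by
    simpa [sub_eq_zero, eq_comm (a := x)] using mem_J.1 hx 1 (one_mem M)
  have h_maps : ∀ x ∈ J, star a x ∈ J := fun x hx => mem_J.2 fun b hb => by
    simpa using mem_J.1 hx (b * star a) (mul_mem hb (star_mem ha))
  have h_surj : Set.SurjOn (star a : H →ₗ[𝕜] H) J J := (LinearMap.injOn_iff_surjOn h_maps).1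
    fun x hx y hy hxy => by rw [← h_right_inv x hx, hxy, h_right_inv y hy]
  refine h_ker ((Submodule.eq_bot_iff _).2 fun x hx => ?_)
  rw [LinearMap.mem_ker] at hx
  have hxJ : x ∈ J := mem_J.2 fun b hb => by simpa [hx] using congr($(h b hb) x)
  obtain ⟨y, hy, rfl⟩ := h_surj hxJ
  rw [← h_right_inv y hy, hx, map_zero]

theorem IsPartialIsometry.mem_unitary_of_ker_eq_bot {a : H →ₗ[𝕜] H} (ha : IsPartialIsometry a)
    (h_ker : LinearMap.ker a = ⊥) : a ∈ unitary (H →ₗ[𝕜] H) := by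
  have h_inj : Function.Injective a := LinearMap.ker_eq_bot.1 h_ker
  have h_left : star a * a = 1 := LinearMap.ext fun x => h_inj congr($ha x)
  exact Unitary.mem_iff.2 ⟨h_left, mul_eq_one_comm.1 h_left⟩

theorem exists_linearIsometryEquiv_of_mem_unitary {u : H →ₗ[𝕜] H}
    (hu : u ∈ unitary (H →ₗ[𝕜] H)) : ∃ V : H ≃ₗᵢ[𝕜] H, ∀ x, V x = u x := by
  have h_inner (x y : H) : inner 𝕜 (u x) (u y) = inner 𝕜 x y := by
    rw [← LinearMap.adjoint_inner_right]
    exact congr(inner 𝕜 x ($(Unitary.star_mul_self_of_mem hu) y))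
  exact ⟨(u.isometryOfInner h_inner).toLinearIsometryEquiv rfl, fun _ => rfl⟩

theorem ker_add_lt_ker {a w : H →ₗ[𝕜] H} (h_final : star a * w = 0) (h_initial : a * star w = 0)
    (hw : w ≠ 0) : LinearMap.ker (a + w) < LinearMap.ker a := by
  refine lt_of_le_not_ge (fun x hx => ?_) fun h_le => hw ?_
  · have h_sum : star a * (a + w) = star a * a := by rw [mul_add, h_final, add_zero]
    rw [← a.ker_adjoint_comp_self]
    change (star a * a) x = 0
    rw [← h_sum, Module.End.mul_apply, hx, map_zero]
  · have h_range : (a + w) * star w = 0 := LinearMap.ext fun x => h_le congr($h_initial x)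
    rw [add_mul, h_initial, zero_add] at h_range
    exact star_eq_zero.1 (linearMap_star_mul_self_eq_zero_iff.1 (by rwa [star_star]))

theorem IsPartialIsometry.exists_orthogonal_mem_centralizer {S : Set (H →ₗ[𝕜] H)}
    {a : H →ₗ[𝕜] H} (ha : IsPartialIsometry a) (haS : a ∈ StarSubalgebra.centralizer 𝕜 S)
    (h_ker : LinearMap.ker a ≠ ⊥) :
    ∃ w ∈ StarSubalgebra.centralizer 𝕜 S,
      IsPartialIsometry w ∧ w ≠ 0 ∧ star a * w = 0 ∧ a * star w = 0 := by
  obtain ⟨b, hb, h_ne⟩ := exists_mem_one_sub_mul_mul_one_sub_ne_zero haS h_ker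
  have h_mem : (1 - a * star a) * b * (1 - star a * a) ∈ StarSubalgebra.centralizer 𝕜 S :=
    mul_mem (mul_mem (sub_mem (one_mem _) (mul_mem haS (star_mem haS))) hb)
      (sub_mem (one_mem _) (mul_mem (star_mem haS) haS))
  obtain ⟨w, hwS, hw, hw₀, ⟨r, hr⟩, ⟨l, hl⟩⟩ :=
    exists_isPartialIsometry_mem_centralizer_of_ne_zero h_mem h_ne
  have h_final : star a * (1 - a * star a) = 0 := by
    rw [mul_sub, mul_one, ← mul_assoc, ha.star_mul_mul_star, sub_self]
  have h_initial : (1 - star a * a) * star a = 0 := by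
    rw [sub_mul, one_mul, ha.star_mul_mul_star, sub_self]
  refine ⟨w, hwS, hw, hw₀, ?_, star_injective ?_⟩
  · simp only [hr, ← mul_assoc, h_final, zero_mul]
  · simp only [hl, star_mul, star_star, mul_assoc, h_initial, mul_zero, star_zero]

theorem IsPartialIsometry.exists_unitary_mem_centralizer {S : Set (H →ₗ[𝕜] H)}
    {a : H →ₗ[𝕜] H} (ha : IsPartialIsometry a) (haS : a ∈ StarSubalgebra.centralizer 𝕜 S) :
    ∃ u ∈ unitary (H →ₗ[𝕜] H), u ∈ StarSubalgebra.centralizer 𝕜 S ∧ u * (star a * a) = a := by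
  induction h_ind : LinearMap.ker a using WellFoundedLT.induction generalizing a with
  | ind K ih =>
    subst h_ind
    by_cases h_ker : LinearMap.ker a = ⊥
    · exact ⟨a, ha.mem_unitary_of_ker_eq_bot h_ker, haS, by rw [← mul_assoc, ha]⟩
    · obtain ⟨w, hwS, hw, hw₀, h_final, h_initial⟩ :=
        ha.exists_orthogonal_mem_centralizer haS h_ker
      have h_final' : star w * a = 0 := by simpa using congr(star $h_final)
      have h_initial' : w * star a = 0 := by simpa using congr(star $h_initial)
      obtain ⟨u, hu, huS, h_ext⟩ := ih _ (ker_add_lt_ker h_final h_initial hw₀)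
        (ha.add hw h_final h_initial) (add_mem haS hwS) rfl
      refine ⟨u, hu, huS, ?_⟩
      have h_restrict : (a + w) * (star a * a) = a := by
        rw [add_mul, ← mul_assoc, ← mul_assoc, ha, h_initial', zero_mul, add_zero]
      calc u * (star a * a) = u * (star (a + w) * a) := by
            rw [star_add, add_mul, h_final', add_zero]
        _ = u * (star (a + w) * (a + w)) * (star a * a) := by
            simp only [mul_assoc, h_restrict]
        _ = a := by rw [h_ext, h_restrict]

theorem exists_isPartialIsometry_of_linearIsometry {K : Submodule 𝕜 H} (L : K →ₗᵢ[𝕜] H) :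
    ∃ a : H →ₗ[𝕜] H, IsPartialIsometry a ∧ star a * a = (K.starProjection : H →L[𝕜] H) ∧
      ∀ x : K, a x = L x := by
  let a : H →ₗ[𝕜] H := L.toLinearMap ∘ₗ (K.orthogonalProjectionOnto : H →ₗ[𝕜] K)
  have h_ext (x : K) : a x = L x := by simp [a]
  have h_initial : star a * a = (K.starProjection : H →L[𝕜] H) := by
    refine LinearMap.ext fun x => ext_inner_left 𝕜 fun y => ?_
    calc inner 𝕜 y ((star a * a) x) = inner 𝕜 (a y) (a x) := LinearMap.adjoint_inner_right a y (a x)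
      _ = inner 𝕜 (K.orthogonalProjectionOnto y) (K.orthogonalProjectionOnto x) :=
        L.inner_map_map _ _
      _ = inner 𝕜 y (K.starProjection x) :=
        Submodule.inner_orthogonalProjectionOnto_eq_of_mem_right _ _
  refine ⟨a, ?_, h_initial, h_ext⟩
  rw [IsPartialIsometry, mul_assoc, h_initial]
  exact LinearMap.ext fun x => h_ext (K.orthogonalProjectionOnto x)

end Operators

section Representation

variable {𝕜 G H : Type*} [RCLike 𝕜] [Group G] [NormedAddCommGroup H] [InnerProductSpace 𝕜 H]

theorem inner_map_map_eq_inner_inv_mul (U : G →* (H ≃ₗᵢ[𝕜] H)) (g h : G) (x y : H) :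
    inner 𝕜 (U g x) (U h y) = inner 𝕜 x (U (g⁻¹ * h) y) := by
  rw [← (U g).inner_map_map x, map_mul, map_inv]
  simp

theorem span_orbit_mem_invtSubmodule (U : G →* (H ≃ₗᵢ[𝕜] H)) (ψ : H) (g : G) :
    Submodule.span 𝕜 (Set.range fun h => U h ψ) ∈ invtSubmodule (U g).toLinearMap := by
  refine Submodule.span_le.2 ?_
  rintro _ ⟨h, rfl⟩
  exact Submodule.subset_span ⟨g * h, by simp⟩

variable [FiniteDimensional 𝕜 H]

/-- The algebra of `G`-equivariant operators of a unitary representation, as the commutant of the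
operators `U g`. -/
noncomputable def commutant (U : G →* (H ≃ₗᵢ[𝕜] H)) : StarSubalgebra 𝕜 (H →ₗ[𝕜] H) :=
  StarSubalgebra.centralizer 𝕜 (Set.range fun g => (U g).toLinearMap)

theorem star_toLinearMap_eq_toLinearMap_inv (U : G →* (H ≃ₗᵢ[𝕜] H)) (g : G) :
    star (U g).toLinearMap = (U g⁻¹).toLinearMap := by
  rw [map_inv]
  exact (U g).adjoint_toLinearMap_eq_symm

theorem mem_commutant_iff {U : G →* (H ≃ₗᵢ[𝕜] H)} {a : H →ₗ[𝕜] H} :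
    a ∈ commutant U ↔ ∀ g x, a (U g x) = U g (a x) := by
  simp only [commutant, StarSubalgebra.mem_centralizer_iff, Set.forall_mem_range,
    star_toLinearMap_eq_toLinearMap_inv, LinearMap.ext_iff, Module.End.mul_apply]
  exact ⟨fun h g x => ((h g).1 x).symm, fun h g => ⟨fun x => (h g x).symm, fun x => (h g⁻¹ x).symm⟩⟩

theorem exists_isPartialIsometry_mem_commutant {U : G →* (H ≃ₗᵢ[𝕜] H)} {ψ φ : H}
    (h : ∀ g, inner 𝕜 ψ (U g ψ) = inner 𝕜 φ (U g φ)) :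
    ∃ a ∈ commutant U, IsPartialIsometry a ∧ (star a * a) ψ = ψ ∧ a ψ = φ := by
  let K := Submodule.span 𝕜 (Set.range fun g => U g ψ)
  obtain ⟨L, hL⟩ := exists_linearIsometry_span_of_inner_eq (𝕜 := 𝕜)
    (v := fun g => U g ψ) (w := fun g => U g φ)
    fun g g' => by simp only [inner_map_map_eq_inner_inv_mul, h]
  obtain ⟨a, ha, h_initial, h_ext⟩ := exists_isPartialIsometry_of_linearIsometry L
  have h_orbit (g : G) : a (U g ψ) = U g φ := (h_ext _).trans (hL g)
  have h_proj : a * (K.starProjection : H →L[𝕜] H) = a := by rw [← h_initial, ← mul_assoc, ha]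
  have hψ : ψ ∈ K := Submodule.subset_span ⟨1, by simp⟩
  have h_eqOn (g : G) : Set.EqOn (a * (U g).toLinearMap) ((U g).toLinearMap * a) K := by
    refine LinearMap.eqOn_span ?_
    rintro _ ⟨g', rfl⟩
    simpa [h_orbit] using h_orbit (g * g')
  refine ⟨a, mem_commutant_iff.2 fun g x => ?_, ha, ?_, by simpa using h_orbit 1⟩
  · have h_comm := commute_starProjection_of_mem_invtSubmodule
      (span_orbit_mem_invtSubmodule U ψ g)
      (star_toLinearMap_eq_toLinearMap_inv U g ▸ span_orbit_mem_invtSubmodule U ψ g⁻¹)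
    calc a (U g x) = a (K.starProjection (U g x)) := congr($h_proj (U g x)).symm
      _ = a (U g (K.starProjection x)) := congr(a ($h_comm x)).symm
      _ = U g (a (K.starProjection x)) := h_eqOn g (Submodule.starProjection_apply_mem K x)
      _ = U g (a x) := congr(U g ($h_proj x))
  · rw [h_initial]
    exact Submodule.starProjection_eq_self_iff.2 hψ

theorem unitarily_G_equivalent_iff_charFun_eq_general (U : G →* (H ≃ₗᵢ[𝕜] H)) (ψ φ : H) :
    (∃ V : H ≃ₗᵢ[𝕜] H, (∀ g : G, ∀ x : H, V (U g x) = U g (V x)) ∧ V ψ = φ) ↔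
      ∀ g : G, inner 𝕜 ψ (U g ψ) = inner 𝕜 φ (U g φ) := by
  constructor
  · rintro ⟨V, hV, rfl⟩ g
    rw [← hV, V.inner_map_map]
  · intro h
    obtain ⟨a, haU, ha, hψ, hφ⟩ := exists_isPartialIsometry_mem_commutant h
    obtain ⟨u, hu, huU, h_ext⟩ := ha.exists_unitary_mem_centralizer haU
    obtain ⟨V, hV⟩ := exists_linearIsometryEquiv_of_mem_unitary hu
    refine ⟨V, fun g x => by simpa only [hV] using mem_commutant_iff.1 huU g x, ?_⟩
    calc V ψ = (u * (star a * a)) ψ := by rw [hV, Module.End.mul_apply, hψ]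
      _ = φ := by rw [h_ext, hφ]

end Representation

/-- **Theorem 2.** Two unit vectors `ψ, φ` of a finite-dimensional
unitary representation `U` of `G` are unitarily `G`-equivalent (some `G`-invariant
unitary maps `ψ` to `φ`) iff their characteristic functions coincide:
`⟪ψ, U g ψ⟫ = ⟪φ, U g φ⟫` for all `g`. -/
theorem unitarily_G_equivalent_iff_charFun_eq
    {G : Type*} [Group G]
    {H : Type*} [NormedAddCommGroup H] [InnerProductSpace ℂ H] [FiniteDimensional ℂ H]
    (U : G →* (H ≃ₗᵢ[ℂ] H)) (ψ φ : H) (hψ : ‖ψ‖ = 1) (hφ : ‖φ‖ = 1) :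
    (∃ V : H ≃ₗᵢ[ℂ] H, (∀ g : G, ∀ x : H, V (U g x) = U g (V x)) ∧ V ψ = φ) ↔
      (∀ g : G, ⟪ψ, U g ψ⟫ = ⟪φ, U g φ⟫) :=
  unitarily_G_equivalent_iff_charFun_eq_general U ψ φ
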